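/- Let m ≥ 2, n ≥ 1, let ζ be a primitive nm-th root of unity, let g ∈ GL_{n+1}(C) be the monomial matrix sending e_i ↦ e_{i−1} (2 ≤ i ≤ n), e_1 ↦ ζ^n e_n, e_{n+1} ↦ ζ^{−n} e_{n+1}, and let q_1 = (1/√n)(1, ζ, ζ^2, ..., ζ^{n−1}, 0)^T ∈ C^{n+1}. Then g ∈ G(m,m,n+1), g q_1 = ζ q_1, and q_1 lies on none of the reflection hyperplanes of G(m,m,n+1) (the orthogonal complements of e_i − ζ^{kn} e_j for 1 ≤ i < j ≤ n+1, 0 ≤ k < m); hence g is a ζ-regular element and (g, ζ, q_1) is an admissible triplet of G(m,m,n+1). -/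

import Mathlib

open Matrix MvPolynomial

namespace Paper

noncomputable section

/-- The standard Hermitian inner product `(v, w) = Σ v_i conj(w_i)` on `ℂ^N`. -/
def herm {N : ℕ} (v w : Fin N → ℂ) : ℂ := ∑ i, v i * (starRingEnd ℂ) (w i)

/-- The reflection `s(v, λ) : w ↦ w - (1 - λ) ((w,v)/(v,v)) v` with root `v` and
nontrivial eigenvalue `λ`, as a matrix. -/
def reflMat {N : ℕ} (v : Fin N → ℂ) (lam : ℂ) : Matrix (Fin N) (Fin N) ℂ :=
  Matrix.of fun i j =>
    (if i = j then (1 : ℂ) else 0) - (1 - lam) * v i * (starRingEnd ℂ) (v j) / herm v v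

/-- The monomial matrix `ι(θ, σ)` with `e_i ↦ θ_{σ(i)} e_{σ(i)}`. -/
def monomialMatrix {N : ℕ} (θ : Fin N → ℂ) (σ : Equiv.Perm (Fin N)) :
    Matrix (Fin N) (Fin N) ℂ :=
  Matrix.of fun j i => if j = σ i then θ (σ i) else 0

/-- The imprimitive reflection group `G(m, p, N)`: all monomial `N × N` matrices whose
nonzero entries are `m`-th roots of unity and whose product of nonzero entries is an
`(m/p)`-th root of unity. -/
def Gimp (m p N : ℕ) : Set (Matrix (Fin N) (Fin N) ℂ) :=
  {M | ∃ (θ : Fin N → ℂ) (σ : Equiv.Perm (Fin N)),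
    (∀ i, θ i ^ m = 1) ∧ (∏ i, θ i) ^ (m / p) = 1 ∧ M = monomialMatrix θ σ}

/-- The `μ`-eigenspace of (the linear map of) a matrix. -/
def eigSpace {n : ℕ} (M : Matrix (Fin n) (Fin n) ℂ) (μ : ℂ) : Submodule ℂ (Fin n → ℂ) :=
  Module.End.eigenspace M.mulVecLin μ

/-! On its first `n` coordinates `g` is a cyclic shift with the factor `ζ ^ n` at the wrap-around,
so the progression `1, ζ, …, ζ ^ (n - 1)` is multiplied by `ζ`. The orthogonal complement of
`e_i - c e_j` with `c ^ m = 1` is the hyperplane `v_j = c v_i`. Taking `m`-th powers of this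
relation for the progression eliminates `c` and leaves `η ^ j = η ^ i`, where `η = ζ ^ m` is a
primitive `n`-th root of unity, which forces `i = j`; if one of the two indices is the last one,
exactly one side of the relation vanishes. -/

section Herm

variable {N : ℕ}

theorem herm_smul_left (a : ℂ) (v w : Fin N → ℂ) : herm (a • v) w = a * herm v w := by
  simp only [herm, Pi.smul_apply, smul_eq_mul, mul_assoc, Finset.mul_sum]

theorem herm_single_sub_smul_single (v : Fin N → ℂ) (c : ℂ) (i j : Fin N) :
    herm v (Pi.single i 1 - c • Pi.single j 1) = v i - starRingEnd ℂ c * v j := by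
  simp [herm, mul_sub, Pi.single_apply, apply_ite (starRingEnd ℂ), mul_comm]

theorem herm_single_sub_smul_single_eq_zero_iff {c : ℂ} (hc : ‖c‖ = 1) (v : Fin N → ℂ)
    (i j : Fin N) : herm v (Pi.single i 1 - c • Pi.single j 1) = 0 ↔ v j = c * v i := by
  have hc₀ : c ≠ 0 := norm_ne_zero_iff.mp (hc ▸ one_ne_zero)
  rw [herm_single_sub_smul_single, ← Complex.inv_eq_conj hc, sub_eq_zero,
    eq_inv_mul_iff_mul_eq₀ hc₀, eq_comm]

end Herm

section Monomial

variable {N : ℕ}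

theorem monomialMatrix_row (θ : Fin N → ℂ) (σ : Equiv.Perm (Fin N)) (j : Fin N) :
    monomialMatrix θ σ j = Pi.single (σ.symm j) (θ j) := by
  ext i
  by_cases h : j = σ i
  · simp [monomialMatrix, h]
  · have h' : i ≠ σ.symm j := fun hi => h (by simp [hi])
    simp [monomialMatrix, h, h']

theorem monomialMatrix_mulSingle_mul_mulSingle_inv_mem_Gimp {m : ℕ} (p : ℕ) {a : ℂ} (ha : a ≠ 0)
    (ham : a ^ m = 1) (r s : Fin N) (σ : Equiv.Perm (Fin N)) :
    monomialMatrix (Pi.mulSingle r a * Pi.mulSingle s a⁻¹) σ ∈ Gimp m p N := by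
  refine ⟨_, σ, fun i => ?_, ?_, rfl⟩
  · rw [← Pi.pow_apply, mul_pow, ← Pi.mulSingle_pow, ← Pi.mulSingle_pow, inv_pow, ham]
    simp
  · simp [Finset.prod_mul_distrib, Finset.prod_pi_mulSingle', ha]

end Monomial

section TwistedCycle

/-- The element of `G(m, m, n + 2)` (for `a ^ m = 1`, `m ≠ 0`) that sends `e_i` to `e_{i-1}` for
`0 < i ≤ n`, `e_0` to `a e_n` and `e_{n+1}` to `a⁻¹ e_{n+1}`, the basis being numbered from `0`.
The paper's `n` is `n + 1` here. -/
def twistedCycle (n : ℕ) (a : ℂ) : Matrix (Fin (n + 2)) (Fin (n + 2)) ℂ :=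
  monomialMatrix (Pi.mulSingle (Fin.last n).castSucc a * Pi.mulSingle (Fin.last (n + 1)) a⁻¹)
    (Fin.cycleRange (Fin.last n).castSucc).symm

variable (n : ℕ) (a : ℂ)

theorem twistedCycle_row_last :
    twistedCycle n a (Fin.last (n + 1)) = Pi.single (Fin.last (n + 1)) a⁻¹ := by
  have hσ : Fin.cycleRange (Fin.last n).castSucc (Fin.last (n + 1)) = Fin.last (n + 1) :=
    Fin.cycleRange_of_gt (Fin.castSucc_lt_last _)
  simp [twistedCycle, monomialMatrix_row, hσ, (Fin.castSucc_lt_last (Fin.last n)).ne']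

theorem twistedCycle_row_castSucc_last :
    twistedCycle n a (Fin.last n).castSucc = Pi.single 0 a := by
  simp [twistedCycle, monomialMatrix_row, (Fin.castSucc_lt_last (Fin.last n)).ne]

theorem twistedCycle_row_castSucc_castSucc (j : Fin n) :
    twistedCycle n a j.castSucc.castSucc = Pi.single j.succ.castSucc 1 := by
  have hlt : j.castSucc.castSucc < (Fin.last n).castSucc := j.castSucc_lt_last
  have hσ : Fin.cycleRange (Fin.last n).castSucc j.castSucc.castSucc = j.succ.castSucc :=
    Fin.ext (Fin.coe_cycleRange_of_lt hlt)
  simp [twistedCycle, monomialMatrix_row, hσ, hlt.ne, (Fin.castSucc_lt_last j.castSucc).ne]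

theorem twistedCycle_eq_of :
    twistedCycle n a = Matrix.of fun j i : Fin (n + 2) =>
      if i.1 = 0 then (if j.1 = n then a else 0)
      else if i.1 = n + 1 then (if j.1 = n + 1 then a⁻¹ else 0)
      else if j.1 + 1 = i.1 then 1 else 0 := by
  ext j i
  have hi := i.isLt
  induction j using Fin.lastCases with
  | last =>
    simp only [twistedCycle_row_last, Pi.single_apply, Fin.ext_iff, of_apply, Fin.val_last]
    grind
  | cast j =>
    induction j using Fin.lastCases with
    | last =>
      simp only [twistedCycle_row_castSucc_last, Pi.single_apply, Fin.ext_iff, of_apply,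
        Fin.val_castSucc, Fin.val_last, Fin.val_zero]
      grind
    | cast j =>
      simp only [twistedCycle_row_castSucc_castSucc, Pi.single_apply, Fin.ext_iff, of_apply,
        Fin.val_castSucc, Fin.val_succ]
      grind

theorem twistedCycle_mem_Gimp {a : ℂ} {m : ℕ} (ha : a ^ m = 1) (hm : m ≠ 0) (p : ℕ) :
    twistedCycle n a ∈ Gimp m p (n + 2) :=
  monomialMatrix_mulSingle_mul_mulSingle_inv_mem_Gimp p (IsUnit.of_pow_eq_one ha hm).ne_zero
    ha _ _ _

end TwistedCycle

section GeomVec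

variable {R : Type*} [MonoidWithZero R]

/-- The vector `(1, x, …, x ^ (n - 1), 0)`, the paper's `q₁` up to normalization. -/
def geomVec (n : ℕ) (x : R) : Fin (n + 1) → R :=
  Fin.snoc (α := fun _ => R) (fun i : Fin n => x ^ (i : ℕ)) 0

theorem geomVec_last (n : ℕ) (x : R) :
    geomVec n x (Fin.last n) = 0 := by
  simp only [geomVec, Fin.snoc_last]

theorem geomVec_castSucc {n : ℕ} (x : R) (i : Fin n) :
    geomVec n x i.castSucc = x ^ (i : ℕ) := by
  simp only [geomVec, Fin.snoc_castSucc]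

theorem geomVec_apply {n : ℕ} (x : R) (i : Fin (n + 1)) :
    geomVec n x i = if i.1 < n then x ^ i.1 else 0 := by
  induction i using Fin.lastCases with
  | last => simp [geomVec_last]
  | cast i => simp [geomVec_castSucc]

end GeomVec

theorem twistedCycle_mulVec_geomVec (n : ℕ) (x : ℂ) :
    twistedCycle n (x ^ (n + 1)) *ᵥ geomVec (n + 1) x = x • geomVec (n + 1) x := by
  ext j
  rw [mulVec, Pi.smul_apply, smul_eq_mul]
  induction j using Fin.lastCases with
  | last => rw [twistedCycle_row_last, single_dotProduct, geomVec_last, mul_zero, mul_zero]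
  | cast j =>
    induction j using Fin.lastCases with
    | last =>
      rw [twistedCycle_row_castSucc_last, single_dotProduct, ← Fin.castSucc_zero,
        geomVec_castSucc, geomVec_castSucc, Fin.val_zero, pow_zero, mul_one, Fin.val_last,
        pow_succ']
    | cast j =>
      rw [twistedCycle_row_castSucc_castSucc, single_one_dotProduct, geomVec_castSucc,
        geomVec_castSucc, Fin.val_succ, Fin.val_castSucc, pow_succ']

theorem geomVec_ne_mul_geomVec {R : Type*} [CommMonoidWithZero R] [Nontrivial R]
    [NoZeroDivisors R] {m n : ℕ} (hm : m ≠ 0) {x c : R} (hx : IsPrimitiveRoot x (n * m))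
    (hc : c ^ m = 1) {i j : Fin (n + 1)} (hij : i ≠ j) :
    geomVec n x j ≠ c * geomVec n x i := by
  have hn : n ≠ 0 := by
    rintro rfl
    exact hij (Subsingleton.elim (α := Fin 1) i j)
  have hx₀ : x ≠ 0 := hx.ne_zero (mul_ne_zero hn hm)
  have hc₀ : c ≠ 0 := (IsUnit.of_pow_eq_one hc hm).ne_zero
  induction i using Fin.lastCases with
  | last =>
    obtain ⟨j, rfl⟩ := Fin.exists_castSucc_eq.mpr hij.symm
    rw [geomVec_last, geomVec_castSucc, mul_zero]
    exact pow_ne_zero _ hx₀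
  | cast i =>
    induction j using Fin.lastCases with
    | last =>
      rw [geomVec_last, geomVec_castSucc]
      exact (mul_ne_zero hc₀ (pow_ne_zero _ hx₀)).symm
    | cast j =>
      rw [geomVec_castSucc, geomVec_castSucc]
      intro h
      have hη : IsPrimitiveRoot (x ^ m) n :=
        hx.pow (Nat.pos_of_ne_zero (mul_ne_zero hn hm)) (mul_comm n m)
      have hpow : (x ^ m) ^ (j : ℕ) = (x ^ m) ^ (i : ℕ) := by
        rw [pow_right_comm, h, mul_pow, hc, one_mul, pow_right_comm]
      exact hij (congrArg Fin.castSucc (Fin.ext (hη.pow_inj j.isLt i.isLt hpow).symm))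

theorem herm_geomVec_single_sub_smul_single_ne_zero {m n : ℕ} (hm : m ≠ 0) {x c : ℂ}
    (hx : IsPrimitiveRoot x (n * m)) (hc : c ^ m = 1) {i j : Fin (n + 1)} (hij : i ≠ j) :
    herm (geomVec n x) (Pi.single i 1 - c • Pi.single j 1) ≠ 0 :=
  (herm_single_sub_smul_single_eq_zero_iff (Complex.norm_eq_one_of_pow_eq_one hc hm) _ i j).not.mpr
    (geomVec_ne_mul_geomVec hm hx hc hij)

/-- Let `m ≥ 2`, `n ≥ 1`, `ζ` a primitive `nm`-th root of unity, `g` the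
monomial matrix with `e_i ↦ e_{i-1}` (`2 ≤ i ≤ n`), `e_1 ↦ ζ^n e_n`,
`e_{n+1} ↦ ζ^{-n} e_{n+1}`, and `q_1 = (1/√n)(1, ζ, ..., ζ^{n-1}, 0)`.  Then
`g ∈ G(m,m,n+1)`, `g q_1 = ζ q_1`, and `q_1` is orthogonal to none of the roots
`e_i - ζ^{kn} e_j` (`i < j`, `0 ≤ k < m`) of `G(m,m,n+1)`, i.e. it lies on no
reflection hyperplane; hence `g` is `ζ`-regular and `(g, ζ, q_1)` is an admissible
triplet of `G(m,m,n+1)`. -/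
theorem statement_10 (m n : ℕ) (hm : 2 ≤ m) (hn : 1 ≤ n)
    (ζ : ℂ) (hζ : IsPrimitiveRoot ζ (n * m))
    (g : Matrix (Fin (n + 1)) (Fin (n + 1)) ℂ)
    (hg : g = Matrix.of fun j i : Fin (n + 1) =>
      if i.1 = 0 then (if j.1 = n - 1 then ζ ^ n else 0)
      else if i.1 = n then (if j.1 = n then (ζ ^ n)⁻¹ else 0)
      else if j.1 + 1 = i.1 then 1 else 0)
    (q₁ : Fin (n + 1) → ℂ)
    (hq₁ : q₁ = fun i => if i.1 < n then (1 / (Real.sqrt n : ℂ)) * ζ ^ i.1 else 0) :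
    g ∈ Gimp m m (n + 1) ∧
    g.mulVec q₁ = ζ • q₁ ∧
    (∀ i j : Fin (n + 1), i < j → ∀ kk : ℕ, kk < m →
      herm q₁ ((Pi.single i 1 : Fin (n + 1) → ℂ) -
        ζ ^ (kk * n) • (Pi.single j 1 : Fin (n + 1) → ℂ)) ≠ 0) := by
  obtain ⟨n, rfl⟩ := Nat.exists_eq_add_of_le' hn
  have hm₀ : m ≠ 0 := by omega
  have hroot : (ζ ^ (n + 1)) ^ m = 1 := by rw [← pow_mul, hζ.pow_eq_one]
  have hg' : g = twistedCycle n (ζ ^ (n + 1)) := hg.trans (twistedCycle_eq_of n _).symm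
  set b : ℂ := 1 / (Real.sqrt (n + 1 : ℕ) : ℂ)
  have hb₀ : b ≠ 0 :=
    one_div_ne_zero (Complex.ofReal_ne_zero.mpr (Real.sqrt_ne_zero'.mpr (by positivity)))
  have hq : q₁ = b • geomVec (n + 1) ζ := by
    ext i
    rw [hq₁, Pi.smul_apply, smul_eq_mul, geomVec_apply, mul_ite, mul_zero]
  subst hg' hq
  refine ⟨?_, ?_, fun i j hij k _ => ?_⟩
  · exact twistedCycle_mem_Gimp n hroot hm₀ m
  · rw [mulVec_smul, twistedCycle_mulVec_geomVec, smul_comm]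
  · have hc : (ζ ^ (k * (n + 1))) ^ m = 1 := by
      rw [mul_comm k, pow_mul, pow_right_comm, hroot, one_pow]
    rw [herm_smul_left]
    exact mul_ne_zero hb₀ (herm_geomVec_single_sub_smul_single_ne_zero hm₀ hζ hc hij.ne)

end
end Paper
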